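/- arXiv:1406.4932 — 2 statements merged into one kernel-verified Lean document; each statement's English description precedes it below -/
import Mathlib

section
/- Let ν be a Borel probability measure on ℝ, let Ω = ℝ^{ℤᵈ} be the space of functions ℤᵈ → ℝ (d ≥ 1) with the infinite product measure μ = ⊗_{x∈ℤᵈ} ν, and for x ∈ ℤᵈ define σ_x : Ω → Ω by (σ_x ω)(y) = ω(y − x). Then each σ_x is μ-measure-preserving, the composition operators S_x f = f ∘ σ_x are unitary on L²(Ω, μ), and there exists a family (U_k)_{k∈ℝᵈ} of unitary operators on L²(Ω, μ) such that: U_0 = Id; U_{k+k'} = U_k ∘ U_{k'} for all k, k' ∈ ℝᵈ; for each f ∈ L²(Ω, μ) the map k ↦ U_k f is continuous; U_k 𝟙 = 𝟙 where 𝟙 is the constant function 1; and U_k (S_x f) = e^{i k·x} S_x (U_k f) for every x ∈ ℤᵈ, every k ∈ ℝᵈ, and every f ∈ L²(Ω, μ) with ∫_Ω f dμ = 0. -/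
open MeasureTheory Filter Topology

/-!
`L²` of a product measure is the Hilbert sum, over the finite sets `A` of coordinates, of the
homogeneous chaoses: the closed spans of the products `∏ x ∈ A, g x (ω x)` with every `g x` of mean
zero. Let `U_k` multiply the chaos of index `A` by `exp (-i k·x_A)`, where `x_A` is the centroid of
`A`. The shift by `x` maps the chaos of index `A` to that of index `A - x`, whose centroid is
`x_A - x`, so moving `U_k` past it costs the factor `exp (i k·x)`. The only exception is `A = ∅`,
whose chaos consists of the constants and is orthogonal to the functions of mean zero.
-/

open scoped ENNReal InnerProductSpace BigOperators

section DiagonalOperators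

/-- Multiplication of the `i`-th coordinate of an `ℓᵖ` family by the unit complex number `c i`. -/
noncomputable def lpCircleSMul {ι : Type*} {G : ι → Type*} [∀ i, NormedAddCommGroup (G i)]
    [∀ i, NormedSpace ℂ (G i)] {p : ℝ≥0∞} [Fact (1 ≤ p)] (c : ι → Circle) :
    lp G p ≃ₗᵢ[ℂ] lp G p where
  toFun f := ⟨fun i => c i • f i, (lp.memℓp f).mono' fun _ => (Circle.norm_smul _ _).le⟩
  invFun f := ⟨fun i => (c i)⁻¹ • f i, (lp.memℓp f).mono' fun _ => (Circle.norm_smul _ _).le⟩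
  map_add' f g := Subtype.ext <| funext fun i => smul_add (c i) (f i) (g i)
  map_smul' z f := Subtype.ext <| funext fun i => smul_comm (c i) z (f i)
  left_inv f := Subtype.ext <| funext fun i => inv_smul_smul (c i) (f i)
  right_inv f := Subtype.ext <| funext fun i => smul_inv_smul (c i) (f i)
  norm_map' _ :=
    have hp : p ≠ 0 := (zero_lt_one.trans_le Fact.out).ne'
    le_antisymm (lp.norm_mono hp fun _ => (Circle.norm_smul _ _).le)
      (lp.norm_mono hp fun _ => (Circle.norm_smul _ _).ge)

theorem lpCircleSMul_single {ι : Type*} [DecidableEq ι] {G : ι → Type*}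
    [∀ i, NormedAddCommGroup (G i)] [∀ i, NormedSpace ℂ (G i)] {p : ℝ≥0∞} [Fact (1 ≤ p)]
    (c : ι → Circle) (i : ι) (v : G i) :
    lpCircleSMul c (lp.single p i v) = lp.single p i (c i • v) := by
  ext j
  rcases eq_or_ne j i with rfl | hj
  · simp [lpCircleSMul]
  · simp [lpCircleSMul, hj]

theorem continuous_apply_of_dense_span {𝕜 Y E F : Type*} [NormedField 𝕜]
    [SeminormedAddCommGroup E] [NormedSpace 𝕜 E] [SeminormedAddCommGroup F] [NormedSpace 𝕜 F]
    [TopologicalSpace Y] {s : Set E} (hs : Dense (Submodule.span 𝕜 s : Set E))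
    {U : Y → E →ₗᵢ[𝕜] F} (hU : ∀ v ∈ s, Continuous fun y => U y v) (f : E) :
    Continuous fun y => U y f := by
  have hspan : ∀ v ∈ Submodule.span 𝕜 s, Continuous fun y => U y v := fun v hv => by
    induction hv using Submodule.span_induction with
    | mem v hv => exact hU v hv
    | zero => simpa only [map_zero] using continuous_const
    | add v w _ _ hv hw => simp_rw [map_add]; exact hv.add hw
    | smul a v _ hv => simp_rw [map_smul]; exact hv.const_smul a
  refine continuous_of_uniform_approx_of_continuous fun u hu => ?_
  obtain ⟨ε, hε, hεu⟩ := Metric.mem_uniformity_dist.1 hu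
  obtain ⟨v, hv, hfv⟩ := hs.exists_dist_lt f hε
  exact ⟨fun y => U y v, hspan v hv, fun y => hεu <| by rwa [LinearIsometry.dist_map]⟩

theorem inner_linearIsometryEquiv_apply {ι 𝕜 E : Type*} [RCLike 𝕜] [NormedAddCommGroup E]
    [InnerProductSpace 𝕜 E] [CompleteSpace E] {G : ι → Type*} [∀ i, NormedAddCommGroup (G i)]
    [∀ i, InnerProductSpace 𝕜 (G i)] {V : ∀ i, G i →ₗᵢ[𝕜] E} (hV : IsHilbertSum 𝕜 G V) {i : ι}
    (v : G i) (f : E) : inner 𝕜 v (hV.linearIsometryEquiv f i) = inner 𝕜 (V i v) f := by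
  classical
  rw [← lp.inner_single_left, ← hV.linearIsometryEquiv_symm_apply_single,
    LinearIsometryEquiv.inner_map_eq_flip, LinearIsometryEquiv.symm_symm]

variable {ι E : Type*} [NormedAddCommGroup E] [InnerProductSpace ℂ E] [CompleteSpace E]
  {V : ι → Submodule ℂ E}

/-- The unitary operator acting on the `i`-th summand of an internal Hilbert sum as multiplication
by the unit complex number `c i`; it is multiplicative in `c`. -/
noncomputable def diagonalUnitary
    (hV : IsHilbertSum ℂ (fun i => V i) fun i => (V i).subtypeₗᵢ) :
    (ι → Circle) →* (E ≃ₗᵢ[ℂ] E) where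
  toFun c := hV.linearIsometryEquiv.trans
    ((lpCircleSMul c).trans hV.linearIsometryEquiv.symm)
  map_one' := by
    ext f
    refine hV.linearIsometryEquiv.symm_apply_eq.2 (Subtype.ext <| funext fun i => ?_)
    exact one_smul Circle _
  map_mul' c c' := by
    ext f
    refine congrArg hV.linearIsometryEquiv.symm (Subtype.ext <| funext fun i => ?_)
    simp [lpCircleSMul, mul_smul]

variable (hV : IsHilbertSum ℂ (fun i => V i) fun i => (V i).subtypeₗᵢ)
include hV

theorem linearIsometryEquiv_apply_eq_zero_of_mem_orthogonal {f : E} {i : ι} (hf : f ∈ (V i)ᗮ) :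
    hV.linearIsometryEquiv f i = 0 :=
  ext_inner_left ℂ fun v => by
    rw [inner_linearIsometryEquiv_apply hV, inner_zero_right]
    exact hf v v.2

theorem dense_span_iUnion : Dense (Submodule.span ℂ (⋃ i, (V i : Set E)) : Set E) := by
  rw [Submodule.dense_iff_topologicalClosure_eq_top, Submodule.topologicalClosure_eq_top_iff,
    ← Submodule.iSup_eq_span, ← Submodule.iInf_orthogonal, Submodule.eq_bot_iff]
  intro f hf
  refine hV.linearIsometryEquiv.map_eq_zero_iff.1 (Subtype.ext <| funext fun i => ?_)
  exact linearIsometryEquiv_apply_eq_zero_of_mem_orthogonal hV ((Submodule.mem_iInf _).1 hf i)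

namespace diagonalUnitary

theorem apply_of_mem (c : ι → Circle) {i : ι} {v : E} (hv : v ∈ V i) :
    diagonalUnitary hV c v = c i • v := by
  classical
  have hsingle (w : V i) : hV.linearIsometryEquiv.symm (lp.single 2 i w) = w :=
    hV.linearIsometryEquiv_symm_apply_single w
  have hcoord : hV.linearIsometryEquiv v = lp.single 2 i (⟨v, hv⟩ : V i) :=
    hV.linearIsometryEquiv.eq_symm_apply.1 (hsingle ⟨v, hv⟩).symm
  calc diagonalUnitary hV c v
      = hV.linearIsometryEquiv.symm (lpCircleSMul c (hV.linearIsometryEquiv v)) := rfl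
    _ = c i • v := by rw [hcoord, lpCircleSMul_single]; exact hsingle (c i • ⟨v, hv⟩ : V i)

theorem apply_const (z : Circle) (f : E) : diagonalUnitary hV (fun _ => z) f = z • f := by
  refine hV.linearIsometryEquiv.symm_apply_eq.2 ?_
  exact (hV.linearIsometryEquiv.map_smul (z : ℂ) f).symm

theorem apply_congr_of_mem_orthogonal {c c' : ι → Circle} {i₀ : ι} (hc : ∀ i ≠ i₀, c i = c' i)
    {f : E} (hf : f ∈ (V i₀)ᗮ) : diagonalUnitary hV c f = diagonalUnitary hV c' f := by
  classical
  have hcoord := linearIsometryEquiv_apply_eq_zero_of_mem_orthogonal hV hf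
  refine congrArg hV.linearIsometryEquiv.symm (Subtype.ext <| funext fun i => ?_)
  rcases eq_or_ne i i₀ with rfl | hi
  · simp [lpCircleSMul, hcoord]
  · simp [lpCircleSMul, hc i hi]

theorem continuous_apply {Y : Type*} [TopologicalSpace Y] {c : Y → ι → Circle}
    (hc : ∀ i, Continuous fun y => c y i) (f : E) :
    Continuous fun y => diagonalUnitary hV (c y) f := by
  refine continuous_apply_of_dense_span (dense_span_iUnion hV)
    (U := fun y => (diagonalUnitary hV (c y)).toLinearIsometry) (fun v hv => ?_) f
  obtain ⟨i, hv⟩ := Set.mem_iUnion.1 hv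
  change Continuous fun y => diagonalUnitary hV (c y) v
  simp_rw [apply_of_mem hV _ hv]
  exact (hc i).smul continuous_const

theorem apply_map_eq_map_apply {T : E ≃ₗᵢ[ℂ] E} {π : ι → ι} (hT : ∀ i, ∀ v ∈ V i, T v ∈ V (π i))
    (c : ι → Circle) (f : E) :
    diagonalUnitary hV c (T f) = T (diagonalUnitary hV (c ∘ π) f) := by
  let L := (T.trans (diagonalUnitary hV c)).toContinuousLinearEquiv.toContinuousLinearMap
  let R := ((diagonalUnitary hV (c ∘ π)).trans T).toContinuousLinearEquiv.toContinuousLinearMap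
  suffices L = R from DFunLike.congr_fun this f
  refine ContinuousLinearMap.ext_on (dense_span_iUnion hV) fun v hv => ?_
  obtain ⟨i, hv⟩ := Set.mem_iUnion.1 hv
  change diagonalUnitary hV c (T v) = T (diagonalUnitary hV (c ∘ π) v)
  rw [apply_of_mem hV c (hT i v hv), apply_of_mem hV (c ∘ π) hv]
  exact (T.map_smul (c (π i) : ℂ) v).symm

theorem apply_map_eq_smul_map_apply {T : E ≃ₗᵢ[ℂ] E} {π : ι → ι}
    (hT : ∀ i, ∀ v ∈ V i, T v ∈ V (π i)) {c : ι → Circle} {z : Circle} {i₀ : ι}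
    (hc : ∀ i ≠ i₀, c (π i) = z * c i) {f : E} (hf : f ∈ (V i₀)ᗮ) :
    diagonalUnitary hV c (T f) = z • T (diagonalUnitary hV c f) := by
  have hphase : diagonalUnitary hV (c ∘ π) f = diagonalUnitary hV ((fun _ => z) * c) f :=
    apply_congr_of_mem_orthogonal hV hc hf
  rw [apply_map_eq_map_apply hV hT, hphase, map_mul, LinearIsometryEquiv.coe_mul,
    Function.comp_apply, apply_const]
  exact T.map_smul (z : ℂ) _

end diagonalUnitary

end DiagonalOperators

section CenteredProducts

/-- A bounded random variable of mean zero, normalised to take values in the closed unit disc. -/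
structure IsCentered {X : Type*} [MeasurableSpace X] (ν : Measure X) (g : X → ℂ) : Prop where
  measurable : Measurable g
  norm_le_one : ∀ r, ‖g r‖ ≤ 1
  integral_eq_zero : ∫ r, g r ∂ν = 0

namespace IsCentered

variable {X : Type*} [MeasurableSpace X] {ν : Measure X}

protected theorem conj {g : X → ℂ} (hg : IsCentered ν g) :
    IsCentered ν fun r => starRingEnd ℂ (g r) where
  measurable := Complex.continuous_conj.measurable.comp hg.measurable
  norm_le_one r := (RCLike.norm_conj _).trans_le (hg.norm_le_one r)
  integral_eq_zero := by rw [integral_conj, hg.integral_eq_zero, map_zero]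

protected theorem zero : IsCentered ν fun _ => 0 where
  measurable := measurable_const
  norm_le_one _ := by simp
  integral_eq_zero := integral_zero X ℂ

theorem indicator_sub_measureReal [IsProbabilityMeasure ν] {B : Set X} (hB : MeasurableSet B) :
    IsCentered ν fun r => B.indicator 1 r - (ν.real B : ℂ) where
  measurable := (measurable_const.indicator hB).sub_const _
  norm_le_one r := by
    have hb : ν.real B ∈ Set.Icc 0 1 := ⟨measureReal_nonneg, measureReal_le_one⟩
    by_cases hr : r ∈ B
    · rw [Set.indicator_of_mem hr, Pi.one_apply, ← Complex.ofReal_one, ← Complex.ofReal_sub,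
        Complex.norm_real, Real.norm_of_nonneg (sub_nonneg.2 hb.2)]
      exact sub_le_self 1 hb.1
    · rw [Set.indicator_of_notMem hr, zero_sub, norm_neg, Complex.norm_real,
        Real.norm_of_nonneg hb.1]
      exact hb.2
  integral_eq_zero := by
    have hint : Integrable (B.indicator (1 : X → ℂ)) ν := (integrable_const 1).indicator hB
    rw [integral_sub hint (integrable_const _)]
    simp [integral_indicator_const, Pi.one_def, hB]

end IsCentered

theorem indicator_pi_eq_sum_prod {I : Type*} [DecidableEq I] {X : I → Type*}
    (t : Finset I) (B : ∀ i, Set (X i)) (b : I → ℂ) (f : (∀ i, X i) → ℂ)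
    (ω : ∀ i, X i) :
    ((t : Set I).pi B).indicator f ω =
      ∑ s ∈ t.powerset, (∏ i ∈ t \ s, b i) *
        ((∏ i ∈ s, ((B i).indicator 1 (ω i) - b i)) * f ω) :=
  calc ((t : Set I).pi B).indicator f ω
      = ((t : Set I).pi B).indicator 1 ω * f ω := by
        rw [← Set.indicator_mul_left]; simp
    _ = (∏ i ∈ t, ((B i).indicator 1 (ω i) - b i + b i)) * f ω := by
        simp only [Set.indicator_pi_one_apply, sub_add_cancel]
    _ = _ := by
        rw [Finset.prod_add, Finset.sum_mul]
        exact Finset.sum_congr rfl fun s _ => by ring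

variable {I : Type*} {X : I → Type*} [∀ i, MeasurableSpace (X i)] {ν : ∀ i, Measure (X i)}

theorem measurable_prod_eval {g : ∀ i, X i → ℂ} (hg : ∀ i, IsCentered (ν i) (g i)) (A : Finset I) :
    Measurable fun ω : ∀ i, X i => ∏ i ∈ A, g i (ω i) :=
  Finset.measurable_fun_prod _ fun i _ => (hg i).measurable.comp (measurable_pi_apply i)

theorem norm_prod_eval_le_one {g : ∀ i, X i → ℂ} (hg : ∀ i, IsCentered (ν i) (g i)) (A : Finset I)
    (ω : ∀ i, X i) : ‖∏ i ∈ A, g i (ω i)‖ ≤ 1 := by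
  rw [norm_prod]
  exact Finset.prod_le_one (fun _ _ => norm_nonneg _) fun i _ => (hg i).norm_le_one _

variable [∀ i, IsProbabilityMeasure (ν i)]

theorem integral_infinitePi_prod_eval (s : Finset I) {g : ∀ i, X i → ℂ}
    (hg : ∀ i ∈ s, Measurable (g i)) :
    ∫ ω, ∏ i ∈ s, g i (ω i) ∂Measure.infinitePi ν = ∏ i ∈ s, ∫ r, g i r ∂ν i := by
  have hmeas : Measurable fun ω : ∀ i : s, X i => ∏ i : s, g i (ω i) :=
    Finset.measurable_fun_prod _ fun i _ => (hg i i.2).comp (measurable_pi_apply i)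
  calc ∫ ω, ∏ i ∈ s, g i (ω i) ∂Measure.infinitePi ν
      = ∫ ω, (fun ω : ∀ i : s, X i => ∏ i : s, g i (ω i)) (s.restrict ω)
          ∂Measure.infinitePi ν := by
        simp_rw [← Finset.prod_coe_sort s]; rfl
    _ = ∏ i : s, ∫ r, g i r ∂ν i := by
      rw [integral_restrict_infinitePi ν hmeas.aestronglyMeasurable,
        integral_fintype_prod_eq_prod]
    _ = ∏ i ∈ s, ∫ r, g i r ∂ν i := Finset.prod_coe_sort s fun i => ∫ r, g i r ∂ν i

theorem integral_prod_mul_prod_eq_zero {A A' : Finset I} (hA : ¬ A ⊆ A') {g g' : ∀ i, X i → ℂ}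
    (hg : ∀ i, IsCentered (ν i) (g i)) (hg' : ∀ i, IsCentered (ν i) (g' i)) :
    ∫ ω, (∏ i ∈ A, g i (ω i)) * ∏ i ∈ A', g' i (ω i) ∂Measure.infinitePi ν = 0 := by
  classical
  obtain ⟨i, hi, hi'⟩ := Finset.not_subset.1 hA
  let h : ∀ i, X i → ℂ := fun i r => (if i ∈ A then g i r else 1) * if i ∈ A' then g' i r else 1
  have hh : ∀ i ∈ A ∪ A', Measurable (h i) := fun i _ => by
    refine Measurable.mul ?_ ?_ <;> split_ifs
    exacts [(hg i).measurable, measurable_const, (hg' i).measurable, measurable_const]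
  have hprod : ∀ ω : ∀ i, X i,
      (∏ i ∈ A, g i (ω i)) * ∏ i ∈ A', g' i (ω i) = ∏ i ∈ A ∪ A', h i (ω i) := fun ω => by
    simp only [h, Finset.prod_mul_distrib, Finset.prod_ite_mem,
      Finset.union_inter_cancel_left, Finset.union_inter_cancel_right]
  simp_rw [hprod]
  rw [integral_infinitePi_prod_eval _ hh]
  refine Finset.prod_eq_zero (Finset.mem_union_left A' hi) ?_
  simpa only [h, if_pos hi, if_neg hi', mul_one] using (hg i).integral_eq_zero

theorem ae_eq_zero_of_forall_integral_pi_eq_zero {μ : Measure (∀ i, X i)} {f : (∀ i, X i) → ℂ}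
    (hf : Integrable f μ)
    (hbox : ∀ (t : Finset I) (B : ∀ i, Set (X i)), (∀ i, MeasurableSet (B i)) →
      ∫ ω in (t : Set I).pi B, f ω ∂μ = 0) : f =ᵐ[μ] 0 := by
  suffices ∀ s, MeasurableSet s → ∫ ω in s, f ω ∂μ = 0 from
    hf.ae_eq_zero_of_forall_setIntegral_eq_zero fun s hs _ => this s hs
  intro s hs
  induction s, hs using MeasurableSpace.induction_on_inter generateFrom_squareCylinders.symm
    (isPiSystem_squareCylinders (fun _ ↦ MeasurableSpace.isPiSystem_measurableSet) (by simp)) with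
  | empty => simp
  | basic s hs =>
    obtain ⟨t, B, hB, rfl⟩ := hs
    exact hbox t B fun i => hB i (Set.mem_univ i)
  | compl s hs ih =>
    have huniv : ∫ ω, f ω ∂μ = 0 := by
      simpa using hbox ∅ (fun _ => Set.univ) fun _ => MeasurableSet.univ
    rw [setIntegral_compl hs hf, huniv, ih, sub_zero]
  | iUnion g hg hgm ih =>
    rw [integral_iUnion hgm hg hf.integrableOn]
    simp only [ih, tsum_zero]

theorem ae_eq_zero_of_forall_integral_prod_mul_eq_zero {μ : Measure (∀ i, X i)}
    {f : (∀ i, X i) → ℂ} (hf : Integrable f μ)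
    (hprod : ∀ (A : Finset I) (g : ∀ i, X i → ℂ), (∀ i, IsCentered (ν i) (g i)) →
      ∫ ω, (∏ i ∈ A, g i (ω i)) * f ω ∂μ = 0) : f =ᵐ[μ] 0 := by
  classical
  refine ae_eq_zero_of_forall_integral_pi_eq_zero hf fun t B hB => ?_
  have hg i := IsCentered.indicator_sub_measureReal (ν := ν i) (hB i)
  rw [← integral_indicator (MeasurableSet.pi t.countable_toSet fun i _ => hB i)]
  simp_rw [indicator_pi_eq_sum_prod t B fun i => ((ν i).real (B i) : ℂ)]
  rw [integral_finsetSum _ fun s _ => (hf.bdd_mul (measurable_prod_eval hg s).aestronglyMeasurable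
    (.of_forall (norm_prod_eval_le_one hg s))).const_mul _]
  refine Finset.sum_eq_zero fun s _ => ?_
  rw [integral_const_mul, hprod s _ hg, mul_zero]

end CenteredProducts

section Chaos

theorem inner_eq_integral_of_ae_eq {Ω : Type*} [MeasurableSpace Ω] {μ : Measure Ω} {g : Ω → ℂ}
    {v : Lp ℂ 2 μ} (hv : v =ᵐ[μ] g) (f : Lp ℂ 2 μ) :
    ⟪v, f⟫_ℂ = ∫ ω, starRingEnd ℂ (g ω) * f ω ∂μ := by
  rw [L2.inner_def]
  refine integral_congr_ae ?_
  filter_upwards [hv] with ω hω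
  rw [RCLike.inner_apply, hω, mul_comm]

variable {I : Type*} {X : I → Type*} [∀ i, MeasurableSpace (X i)] (ν : ∀ i, Measure (X i))

/-- The homogeneous chaos of index `A` in the Efron–Stein (Hoeffding) decomposition of `L²` of a
product measure: the closed span of the products, over the coordinates in `A`, of centred functions
of a single coordinate. -/
noncomputable def chaos (A : Finset I) : Submodule ℂ (Lp ℂ 2 (Measure.infinitePi ν)) :=
  (Submodule.span ℂ {f : Lp ℂ 2 (Measure.infinitePi ν) | ∃ g : ∀ i, X i → ℂ,
    (∀ i, IsCentered (ν i) (g i)) ∧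
      f =ᵐ[Measure.infinitePi ν] fun ω => ∏ i ∈ A, g i (ω i)}).topologicalClosure

variable {ν}

namespace chaos

theorem mem_of_ae_eq_prod {A : Finset I} {g : ∀ i, X i → ℂ} (hg : ∀ i, IsCentered (ν i) (g i))
    {f : Lp ℂ 2 (Measure.infinitePi ν)}
    (hf : f =ᵐ[Measure.infinitePi ν] fun ω => ∏ i ∈ A, g i (ω i)) : f ∈ chaos ν A :=
  Submodule.le_topologicalClosure _ (Submodule.subset_span ⟨g, hg, hf⟩)

theorem mem_empty_of_ae_eq_one {f : Lp ℂ 2 (Measure.infinitePi ν)}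
    (hf : f =ᵐ[Measure.infinitePi ν] fun _ => 1) : f ∈ chaos ν ∅ :=
  mem_of_ae_eq_prod (fun _ => IsCentered.zero) <| by simpa only [Finset.prod_empty] using hf

theorem le_of_forall_prod_mem {A : Finset I} {W : Submodule ℂ (Lp ℂ 2 (Measure.infinitePi ν))}
    (hW : IsClosed (W : Set (Lp ℂ 2 (Measure.infinitePi ν))))
    (h : ∀ (g : ∀ i, X i → ℂ) (f : Lp ℂ 2 (Measure.infinitePi ν)), (∀ i, IsCentered (ν i) (g i)) →
      f =ᵐ[Measure.infinitePi ν] (fun ω => ∏ i ∈ A, g i (ω i)) → f ∈ W) : chaos ν A ≤ W :=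
  Submodule.topologicalClosure_minimal _
    (Submodule.span_le.2 fun f ⟨g, hg, hf⟩ => h g f hg hf) hW

variable [∀ i, IsProbabilityMeasure (ν i)]

theorem exists_mem_ae_eq_prod (A : Finset I) {g : ∀ i, X i → ℂ}
    (hg : ∀ i, IsCentered (ν i) (g i)) :
    ∃ f ∈ chaos ν A, f =ᵐ[Measure.infinitePi ν] fun ω => ∏ i ∈ A, g i (ω i) := by
  have hmem : MemLp (fun ω : ∀ i, X i => ∏ i ∈ A, g i (ω i)) 2 (Measure.infinitePi ν) :=
    .of_bound (measurable_prod_eval hg A).aestronglyMeasurable 1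
      (.of_forall (norm_prod_eval_le_one hg A))
  exact ⟨hmem.toLp _, mem_of_ae_eq_prod hg hmem.coeFn_toLp, hmem.coeFn_toLp⟩

theorem mem_orthogonal_iff {A : Finset I} {f : Lp ℂ 2 (Measure.infinitePi ν)} :
    f ∈ (chaos ν A)ᗮ ↔ ∀ g : ∀ i, X i → ℂ, (∀ i, IsCentered (ν i) (g i)) →
      ∫ ω, (∏ i ∈ A, g i (ω i)) * f ω ∂Measure.infinitePi ν = 0 := by
  constructor
  · intro hf g hg
    obtain ⟨v, hv, hvg⟩ := exists_mem_ae_eq_prod A fun i => (hg i).conj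
    simpa only [inner_eq_integral_of_ae_eq hvg, map_prod, Complex.conj_conj] using hf v hv
  · intro hf
    suffices chaos ν A ≤ (ℂ ∙ f)ᗮ from fun v hv =>
      Submodule.mem_orthogonal_singleton_iff_inner_left.1 (this hv)
    refine le_of_forall_prod_mem (Submodule.isClosed_orthogonal _) fun g v hg hv => ?_
    rw [Submodule.mem_orthogonal_singleton_iff_inner_left, inner_eq_integral_of_ae_eq hv]
    simpa only [map_prod] using hf _ fun i => (hg i).conj

theorem isOrtho {A A' : Finset I} (hA : A ≠ A') : chaos ν A ⟂ chaos ν A' := by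
  wlog hsub : ¬ A ⊆ A' generalizing A A' with hwlog
  · exact (hwlog hA.symm fun h => hA (Finset.Subset.antisymm (not_not.1 hsub) h)).symm
  rw [Submodule.isOrtho_comm]
  refine le_of_forall_prod_mem (Submodule.isClosed_orthogonal _) fun g' f hg' hf => ?_
  refine mem_orthogonal_iff.2 fun g hg => ?_
  rw [← integral_prod_mul_prod_eq_zero hsub hg hg']
  refine integral_congr_ae ?_
  filter_upwards [hf] with ω hω
  rw [hω]

theorem iSup_topologicalClosure : (⨆ A, chaos ν A).topologicalClosure = ⊤ := by
  rw [Submodule.topologicalClosure_eq_top_iff, ← Submodule.iInf_orthogonal, Submodule.eq_bot_iff]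
  intro f hf
  have hfi : Integrable f (Measure.infinitePi ν) := (Lp.memLp f).integrable one_le_two
  rw [Lp.eq_zero_iff_ae_eq_zero]
  exact ae_eq_zero_of_forall_integral_prod_mul_eq_zero hfi fun A =>
    mem_orthogonal_iff.1 ((Submodule.mem_iInf _).1 hf A)

variable (ν) in
theorem isHilbertSum :
    IsHilbertSum ℂ (fun A => chaos ν A) fun A => (chaos ν A).subtypeₗᵢ :=
  have (A : Finset I) : CompleteSpace (chaos ν A) :=
    (Submodule.isClosed_topologicalClosure _).completeSpace_coe
  .mkInternal _ (.of_pairwise fun _ _ => isOrtho) iSup_topologicalClosure.ge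

theorem mem_orthogonal_empty_of_integral_eq_zero {f : Lp ℂ 2 (Measure.infinitePi ν)}
    (hf : ∫ ω, f ω ∂Measure.infinitePi ν = 0) : f ∈ (chaos ν ∅)ᗮ :=
  mem_orthogonal_iff.2 fun g _ => by simpa only [Finset.prod_empty, one_mul] using hf

end chaos

end Chaos

section Reindexing

/-- The isometric isomorphism `f ↦ f ∘ e` between `Lᵖ` spaces induced by a measure preserving
equivalence `e`. -/
noncomputable def lpCompEquiv (𝕜 : Type*) {E α β : Type*} [NormedRing 𝕜] [NormedAddCommGroup E]
    [Module 𝕜 E] [IsBoundedSMul 𝕜 E] [MeasurableSpace α] [MeasurableSpace β] {μ : Measure α}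
    {μ' : Measure β} {p : ℝ≥0∞} [Fact (1 ≤ p)] (e : α ≃ᵐ β) (he : MeasurePreserving e μ μ') :
    Lp E p μ' ≃ₗᵢ[𝕜] Lp E p μ :=
  .ofSurjective (Lp.compMeasurePreservingₗᵢ 𝕜 e he) fun f =>
    ⟨Lp.compMeasurePreserving e.symm (he.symm e) f, by
      change Lp.compMeasurePreserving e he (Lp.compMeasurePreserving e.symm (he.symm e) f) = f
      simp_rw [← Lp.compMeasurePreserving_comp_apply, MeasurableEquiv.symm_comp_self]
      exact Lp.compMeasurePreserving_id_apply f⟩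

variable {I J X : Type*} [MeasurableSpace X] (ν : Measure X) [IsProbabilityMeasure ν]

theorem measurePreserving_comp_of_injective {e : J → I} (he : e.Injective) :
    MeasurePreserving (fun ω : I → X => ω ∘ e) (Measure.infinitePi fun _ => ν)
      (Measure.infinitePi fun _ => ν) :=
  ⟨measurable_pi_lambda _ fun j => measurable_pi_apply (e j),
    Measure.map_infinitePi_infinitePi_of_inj (P := fun _ => ν) he⟩

/-- The unitary operator `f ↦ (ω ↦ f (ω ∘ e))` between the `L²` spaces of two powers of `ν`, induced
by a bijection `e` of the index sets. -/
noncomputable def reindexL2 (e : J ≃ I) :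
    Lp ℂ 2 (Measure.infinitePi fun _ : J => ν) ≃ₗᵢ[ℂ] Lp ℂ 2 (Measure.infinitePi fun _ : I => ν) :=
  lpCompEquiv ℂ (.arrowCongr' e.symm (.refl X)) (measurePreserving_comp_of_injective ν e.injective)

namespace reindexL2

theorem ae_eq (e : J ≃ I) (f : Lp ℂ 2 (Measure.infinitePi fun _ : J => ν)) :
    reindexL2 ν e f =ᵐ[Measure.infinitePi fun _ => ν] fun ω => f (ω ∘ e) :=
  Lp.coeFn_compMeasurePreserving f (measurePreserving_comp_of_injective ν e.injective)

theorem mem_chaos_map (e : J ≃ I) {A : Finset J} {f : Lp ℂ 2 (Measure.infinitePi fun _ : J => ν)}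
    (hf : f ∈ chaos (fun _ => ν) A) :
    reindexL2 ν e f ∈ chaos (fun _ => ν) (A.map e.toEmbedding) := by
  suffices chaos (fun _ => ν) A ≤ (chaos (fun _ => ν) (A.map e.toEmbedding)).comap
    (reindexL2 ν e).toLinearEquiv.toLinearMap from this hf
  refine chaos.le_of_forall_prod_mem
    ((Submodule.isClosed_topologicalClosure _).preimage (reindexL2 ν e).continuous)
    fun g f hg hf => ?_
  refine chaos.mem_of_ae_eq_prod (g := fun i => g (e.symm i)) (fun i => hg (e.symm i)) ?_
  have hcomp := measurePreserving_comp_of_injective ν e.injective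
  filter_upwards [ae_eq ν e f, hcomp.quasiMeasurePreserving.ae hf] with ω hω hfω
  simp only [Finset.prod_map, Equiv.coe_toEmbedding, Equiv.symm_apply_apply]
  exact hω.trans hfω

end reindexL2

end Reindexing

section Phases

variable {K G : Type*} [AddMonoid K] [AddGroup G] (p : K →+ G →+ ℝ)

/-- The phase `exp (-i k·x_A)` attached to a finite set `A`, where `x_A` is the centroid of `A` and
`k·x = p k x`; an empty average is `0`, so the phase of the empty set is `1`. -/
noncomputable def centroidPhase : AddChar K (Finset G → Circle) where
  toFun k A := Circle.exp (-𝔼 x ∈ A, p k x)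
  map_zero_eq_one' := by ext; simp
  map_add_eq_mul' k k' := by
    funext A
    simp [Finset.expect_add_distrib, add_comm, Circle.exp_add]

namespace centroidPhase

theorem apply_empty (k : K) : centroidPhase p k ∅ = 1 := by simp [centroidPhase]

theorem continuous_apply [TopologicalSpace K] {p : K →+ G →+ ℝ}
    (hp : ∀ x, Continuous fun k => p k x) (A : Finset G) :
    Continuous fun k => centroidPhase p k A := by
  simp only [centroidPhase, AddChar.coe_mk, Finset.expect_eq_sum_div_card]
  fun_prop

theorem apply_map_subRight (k : K) (x : G) {A : Finset G} (hA : A.Nonempty) :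
    centroidPhase p k (A.map (Equiv.subRight x).toEmbedding) =
      Circle.exp (p k x) * centroidPhase p k A := by
  have hcentroid : 𝔼 y ∈ A.map (Equiv.subRight x).toEmbedding, p k y = 𝔼 y ∈ A, p k y - p k x :=
    calc 𝔼 y ∈ A.map (Equiv.subRight x).toEmbedding, p k y
        = 𝔼 y ∈ A, p k (y - x) := .symm <|
          Finset.expect_equiv (Equiv.subRight x) (by simp) fun _ _ => rfl
      _ = (𝔼 y ∈ A, p k y) - p k x := by
          simp only [map_sub, Finset.expect_sub_distrib, Finset.expect_const hA]
  simp only [centroidPhase, AddChar.coe_mk]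
  rw [hcentroid, ← Circle.exp_add, neg_sub, sub_eq_add_neg]

end centroidPhase

end Phases

section TwistedShifts

variable {K G X : Type*} [AddMonoid K] [AddGroup G] [MeasurableSpace X] (ν : Measure X)
  [IsProbabilityMeasure ν] (p : K →+ G →+ ℝ)

/-- The unitary representation `k ↦ U_k` of `K` on `L²(X^G)` in which `U_k` multiplies the chaos of
index `A` by the phase of the centroid of `A`. -/
noncomputable def centroidUnitary :
    AddChar K (Lp ℂ 2 (Measure.infinitePi fun _ : G => ν) ≃ₗᵢ[ℂ]
      Lp ℂ 2 (Measure.infinitePi fun _ : G => ν)) :=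
  (diagonalUnitary (chaos.isHilbertSum fun _ => ν)).compAddChar (centroidPhase p)

namespace centroidUnitary

theorem continuous_apply [TopologicalSpace K] {p : K →+ G →+ ℝ}
    (hp : ∀ x, Continuous fun k => p k x) (f : Lp ℂ 2 (Measure.infinitePi fun _ : G => ν)) :
    Continuous fun k => centroidUnitary ν p k f :=
  diagonalUnitary.continuous_apply _ (centroidPhase.continuous_apply hp) f

theorem apply_of_ae_eq_one (k : K) {f : Lp ℂ 2 (Measure.infinitePi fun _ : G => ν)}
    (hf : f =ᵐ[Measure.infinitePi fun _ => ν] fun _ => 1) : centroidUnitary ν p k f = f :=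
  calc centroidUnitary ν p k f
      = centroidPhase p k ∅ • f :=
        diagonalUnitary.apply_of_mem _ _ (chaos.mem_empty_of_ae_eq_one hf)
    _ = f := by rw [centroidPhase.apply_empty, one_smul]

theorem apply_reindexL2_subRight (k : K) (x : G)
    {f : Lp ℂ 2 (Measure.infinitePi fun _ : G => ν)}
    (hf : ∫ ω, f ω ∂Measure.infinitePi (fun _ => ν) = 0) :
    centroidUnitary ν p k (reindexL2 ν (Equiv.subRight x) f) =
      Circle.exp (p k x) • reindexL2 ν (Equiv.subRight x) (centroidUnitary ν p k f) := by
  refine diagonalUnitary.apply_map_eq_smul_map_apply (chaos.isHilbertSum fun _ => ν)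
    (π := fun A => A.map (Equiv.subRight x).toEmbedding) (fun A v hv => ?_) (fun A hA => ?_)
    (chaos.mem_orthogonal_empty_of_integral_eq_zero hf)
  · exact reindexL2.mem_chaos_map ν (Equiv.subRight x) hv
  · exact centroidPhase.apply_map_subRight p k x (Finset.nonempty_iff_ne_empty.2 hA)

end centroidUnitary

end TwistedShifts

theorem stmt_4_general {X G K : Type*} [MeasurableSpace X] [AddGroup G] [AddMonoid K]
    [TopologicalSpace K] (ν : Measure X) [IsProbabilityMeasure ν] (p : K →+ G →+ ℝ)
    (hp : ∀ x, Continuous fun k => p k x) :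
    let μ := Measure.infinitePi fun _ : G => ν
    let σ : G → (G → X) → G → X := fun x ω y => ω (y - x)
    (∀ x, MeasurePreserving (σ x) μ μ) ∧
    ∃ S : G → (Lp ℂ 2 μ ≃ₗᵢ[ℂ] Lp ℂ 2 μ),
      (∀ x (f : Lp ℂ 2 μ), S x f =ᵐ[μ] fun ω => f (σ x ω)) ∧
      ∃ U : K → (Lp ℂ 2 μ ≃ₗᵢ[ℂ] Lp ℂ 2 μ),
        U 0 = LinearIsometryEquiv.refl ℂ (Lp ℂ 2 μ) ∧
        (∀ k k' (f : Lp ℂ 2 μ), U (k + k') f = U k (U k' f)) ∧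
        (∀ f : Lp ℂ 2 μ, Continuous fun k => U k f) ∧
        (∀ k (one : Lp ℂ 2 μ), one =ᵐ[μ] (fun _ => 1) → U k one = one) ∧
        ∀ k x (f : Lp ℂ 2 μ), ∫ ω, f ω ∂μ = 0 →
          U k (S x f) = Complex.exp (Complex.I * (p k x : ℝ)) • S x (U k f) := by
  refine ⟨fun x => measurePreserving_comp_of_injective ν (Equiv.subRight x).injective,
    fun x => reindexL2 ν (Equiv.subRight x), fun x => reindexL2.ae_eq ν (Equiv.subRight x),
    centroidUnitary ν p, (centroidUnitary ν p).map_zero_eq_one, fun k k' f => ?_,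
    centroidUnitary.continuous_apply ν hp,
    fun k _ => centroidUnitary.apply_of_ae_eq_one ν p k, fun k x f hf => ?_⟩
  · rw [(centroidUnitary ν p).map_add_eq_mul, LinearIsometryEquiv.coe_mul, Function.comp_apply]
  · rw [centroidUnitary.apply_reindexL2_subRight ν p k x hf, Circle.smul_def, Circle.coe_exp,
      mul_comm]

/-- The Euclidean pairing `k·x = ∑ j, k j * x j` of a wave vector with a lattice point. -/
def latticePairing (d : ℕ) : (Fin d → ℝ) →+ (Fin d → ℤ) →+ ℝ :=
  AddMonoidHom.mk' (fun k => AddMonoidHom.mk' (fun x => ∑ j, k j * (x j : ℝ)) fun x y => by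
    simp [mul_add, Finset.sum_add_distrib]) fun k k' => by
    ext x
    simp [add_mul, Finset.sum_add_distrib]

theorem continuous_latticePairing {d : ℕ} (x : Fin d → ℤ) :
    Continuous fun k => latticePairing d k x := by
  simp only [latticePairing, AddMonoidHom.mk'_apply]
  fun_prop

/-- Equivalence of twisted shifts on product spaces. Let `ν` be a Borel
probability measure on `ℝ`, `Ω = ℝ^{ℤᵈ}` with the product measure `μ = ⊗_x ν` (characterized
by its values on measurable cylinder sets), and `σ_x ω (y) = ω (y − x)` the shifts.  Then each
`σ_x` is `μ`-measure-preserving, the composition operators `S_x f = f ∘ σ_x` are unitary on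
`L²(Ω, μ)`, and there is a strongly continuous `d`-parameter unitary group `k ↦ U_k` on
`L²(Ω, μ)` with `U_k 𝟙 = 𝟙` and `U_k S_x f = e^{ik·x} S_x U_k f` whenever `∫ f dμ = 0`. -/
theorem stmt_4 (d : ℕ) (hd : 1 ≤ d)
    (ν : Measure ℝ) [IsProbabilityMeasure ν]
    (μ : Measure ((Fin d → ℤ) → ℝ)) [IsProbabilityMeasure μ]
    (hμ : ∀ (t : Finset (Fin d → ℤ)) (B : (Fin d → ℤ) → Set ℝ),
      (∀ i ∈ t, MeasurableSet (B i)) →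
        μ {ω | ∀ i ∈ t, ω i ∈ B i} = ∏ i ∈ t, ν (B i))
    (σ : (Fin d → ℤ) → ((Fin d → ℤ) → ℝ) → ((Fin d → ℤ) → ℝ))
    (hσ : ∀ x ω y, σ x ω y = ω (y - x)) :
    (∀ x, MeasurePreserving (σ x) μ μ) ∧
    ∃ S : (Fin d → ℤ) → (Lp ℂ 2 μ ≃ₗᵢ[ℂ] Lp ℂ 2 μ),
      (∀ (x : Fin d → ℤ) (f : Lp ℂ 2 μ),
          (S x f : ((Fin d → ℤ) → ℝ) → ℂ) =ᵐ[μ] fun ω => f (σ x ω)) ∧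
      ∃ U : (Fin d → ℝ) → (Lp ℂ 2 μ ≃ₗᵢ[ℂ] Lp ℂ 2 μ),
        U 0 = LinearIsometryEquiv.refl ℂ (Lp ℂ 2 μ) ∧
        (∀ (k k' : Fin d → ℝ) (f : Lp ℂ 2 μ), U (k + k') f = U k (U k' f)) ∧
        (∀ f : Lp ℂ 2 μ, Continuous fun k : Fin d → ℝ => U k f) ∧
        (∀ (k : Fin d → ℝ) (one : Lp ℂ 2 μ),
          (one : ((Fin d → ℤ) → ℝ) → ℂ) =ᵐ[μ] (fun _ => 1) → U k one = one) ∧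
        (∀ (k : Fin d → ℝ) (x : Fin d → ℤ) (f : Lp ℂ 2 μ),
          (∫ ω, f ω ∂μ) = 0 →
            U k (S x f) =
              Complex.exp (Complex.I * (∑ j, k j * (x j : ℝ) : ℝ)) • S x (U k f)) := by
  obtain rfl : μ = Measure.infinitePi fun _ => ν :=
    Measure.eq_infinitePi _ fun t B hB => hμ t B fun i _ => hB i
  obtain rfl : σ = fun x ω y => ω (y - x) := by ext; exact hσ _ _ _
  exact stmt_4_general ν (latticePairing d) continuous_latticePairing
end

section
/- Let (S, μ) be a probability space equipped with μ-measure-preserving measurable maps σ_x : S → S for x ∈ ℤᵈ satisfying σ_0 = id and σ_x ∘ σ_y = σ_{x+y}. Let F : S × ℤᵈ × ℤᵈ → ℂ be measurable in its first argument with ‖F‖_{W¹} := sup_{x∈ℤᵈ} Σ_{ζ∈ℤᵈ} ∫_S |F(s, x+ζ, ζ)| dμ(s) < ∞ and with Σ_{x,y∈ℤᵈ} ∫_S |F(s, x, y)|² dμ(s) < ∞, and for k ∈ ℝᵈ define F̂_k(s, x) := Σ_{ζ∈ℤᵈ} e^{i k·ζ} F(σ_ζ s, x−ζ, −ζ). Then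 (Plancherel identity) Σ_{x∈ℤᵈ} (2π)^{−d} ∫_{[0,2π]^d} ∫_S |F̂_k(s, x)|² dμ(s) dk = Σ_{x,y∈ℤᵈ} ∫_S |F(s, x, y)|² dμ(s). -/
open MeasureTheory ENNReal

/-- The augmented-space norm `‖F‖_{W¹} = sup_x Σ_ζ ∫ |F(s, x+ζ, ζ)| dμ(s)`
(as an extended nonnegative real). -/
noncomputable def W1norm {S : Type*} [MeasurableSpace S] (μ : Measure S) {d : ℕ}
    (F : S → (Fin d → ℤ) → (Fin d → ℤ) → ℂ) : ℝ≥0∞ :=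
  ⨆ x : Fin d → ℤ, ∑' ζ : Fin d → ℤ, ∫⁻ s, (‖F s (x + ζ) ζ‖₊ : ℝ≥0∞) ∂μ

/-- The Fourier transform `F̂_k(s,x) = Σ_ζ e^{ik·ζ} F(σ_ζ s, x−ζ, −ζ)`. -/
noncomputable def fourierW {S : Type*} {d : ℕ} (σ : (Fin d → ℤ) → S → S)
    (F : S → (Fin d → ℤ) → (Fin d → ℤ) → ℂ) (k : Fin d → ℝ) (s : S) (x : Fin d → ℤ) : ℂ :=
  ∑' ζ : Fin d → ℤ,
    Complex.exp (Complex.I * (∑ j, k j * (ζ j : ℝ) : ℝ)) * F (σ ζ s) (x - ζ) (-ζ)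

/-!
The function `k ↦ F̂_k(s, x)` is the Fourier series on the torus with coefficients
`F(σ_ζ s, x - ζ, -ζ)`. Invariance of `μ` under `σ_ζ` turns the `W¹` bound into absolute convergence
of this series for almost every `s`; Parseval's identity can then be applied for fixed `s` and
integrated over `s`, and invariance again removes `σ_ζ` from each term. The result is the sum of
`∫ |F(s, x + ζ, ζ)|² dμ` over all `ζ`, and summing over `x` sweeps out all pairs of lattice points.
-/

section Parseval

variable {𝕜 ι : Type*} [RCLike 𝕜]

theorem hasSum_norm_sq_of_orthonormal {H : Type*} [SeminormedAddCommGroup H]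
    [InnerProductSpace 𝕜 H] {v : ι → H} (hv : Orthonormal 𝕜 v) {a : ι → 𝕜} {f : H}
    (hf : HasSum (fun i => a i • v i) f) :
    HasSum (fun i => ‖a i‖ ^ 2) (‖f‖ ^ 2) :=
  (hf.norm.pow 2).congr fun s => by simpa using hv.orthogonalFamily.norm_sum a s

theorem enorm_sq_eq_tsum_of_orthonormal {H : Type*} [SeminormedAddCommGroup H]
    [InnerProductSpace 𝕜 H] {v : ι → H} (hv : Orthonormal 𝕜 v) {a : ι → 𝕜} {f : H}
    (hf : HasSum (fun i => a i • v i) f) :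
    ‖f‖ₑ ^ 2 = ∑' i, ‖a i‖ₑ ^ 2 := by
  have hsum := hasSum_norm_sq_of_orthonormal hv hf
  simp only [← ofReal_norm, ← ENNReal.ofReal_pow (norm_nonneg _)]
  rw [← hsum.tsum_eq, ENNReal.ofReal_tsum_of_nonneg (fun _ => by positivity) hsum.summable]

variable {X : Type*} [MeasurableSpace X] {ν : Measure X} [Countable ι] {e : ι → X → 𝕜}

theorem lintegral_enorm_sq_tsum_of_orthonormal (hmem : ∀ i, MemLp (e i) 2 ν)
    (he : Orthonormal 𝕜 fun i => (hmem i).toLp (e i)) {a : ι → 𝕜} (ha : Summable a) :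
    ∫⁻ x, ‖∑' i, e i x * a i‖ₑ ^ 2 ∂ν = ∑' i, ‖a i‖ₑ ^ 2 := by
  set u : ι → Lp 𝕜 2 ν := fun i => a i • (hmem i).toLp (e i) with hu
  have hnorm : Summable fun i => ‖u i‖ := by
    simpa only [hu, norm_smul, he.1, mul_one] using ha.norm
  have hseries : ⇑(∑' i, u i) =ᵐ[ν] fun x => ∑' i, e i x * a i := by
    have hterm : ∀ᵐ x ∂ν, ∀ i, u i x = e i x * a i := ae_all_iff.2 fun i => by
      filter_upwards [Lp.coeFn_smul (a i) ((hmem i).toLp (e i)), (hmem i).coeFn_toLp]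
        with x hsmul htoLp
      rw [hu, hsmul, Pi.smul_apply, htoLp, smul_eq_mul, mul_comm]
    filter_upwards [Lp.coeFn_tsum (tsum_enorm_ne_top_iff_summable_norm.2 hnorm), hterm]
      with x htsum hx
    rw [htsum, tsum_congr hx]
  calc ∫⁻ x, ‖∑' i, e i x * a i‖ₑ ^ 2 ∂ν = ∫⁻ x, ‖(∑' i, u i : Lp 𝕜 2 ν) x‖ₑ ^ 2 ∂ν :=
        lintegral_congr_ae (hseries.symm.fun_comp (‖·‖ₑ ^ 2))
    _ = ‖∑' i, u i‖ₑ ^ 2 := by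
        simpa [Lp.enorm_def] using
          (eLpNorm_nnreal_pow_eq_lintegral (f := ⇑(∑' i, u i)) (μ := ν) (two_ne_zero)).symm
    _ = ∑' i, ‖a i‖ₑ ^ 2 := enorm_sq_eq_tsum_of_orthonormal he hnorm.of_norm.hasSum

theorem lintegral_lintegral_enorm_sq_tsum_of_orthonormal [SFinite ν] {S : Type*}
    [MeasurableSpace S] {μ : Measure S} [SFinite μ] (hmem : ∀ i, MemLp (e i) 2 ν)
    (he : Orthonormal 𝕜 fun i => (hmem i).toLp (e i)) {a : ι → S → 𝕜}
    (ha : ∀ i, AEMeasurable (a i) μ) (hsum : ∑' i, ∫⁻ s, ‖a i s‖ₑ ∂μ ≠ ∞) :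
    ∫⁻ x, ∫⁻ s, ‖∑' i, e i x * a i s‖ₑ ^ 2 ∂μ ∂ν = ∑' i, ∫⁻ s, ‖a i s‖ₑ ^ 2 ∂μ := by
  have hmeas : AEMeasurable (fun p : X × S => ∑' i, e i p.1 * a i p.2) (ν.prod μ) :=
    .tsum fun i => (hmem i).1.aemeasurable.comp_fst.mul (ha i).comp_snd
  have hsummable : ∀ᵐ s ∂μ, Summable fun i => ‖a i s‖ :=
    summable_norm_of_tsum_eLpNorm_ne_top le_rfl (fun i => (ha i).aestronglyMeasurable)
      (by simpa only [eLpNorm_one_eq_lintegral_enorm] using hsum)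
  calc ∫⁻ x, ∫⁻ s, ‖∑' i, e i x * a i s‖ₑ ^ 2 ∂μ ∂ν
      = ∫⁻ s, ∫⁻ x, ‖∑' i, e i x * a i s‖ₑ ^ 2 ∂ν ∂μ :=
        lintegral_lintegral_swap (hmeas.enorm.pow_const 2)
    _ = ∫⁻ s, ∑' i, ‖a i s‖ₑ ^ 2 ∂μ := by
        refine lintegral_congr_ae (hsummable.mono fun s hs => ?_)
        exact lintegral_enorm_sq_tsum_of_orthonormal hmem he hs.of_norm
    _ = ∑' i, ∫⁻ s, ‖a i s‖ₑ ^ 2 ∂μ := lintegral_tsum fun i => (ha i).enorm.pow_const 2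

end Parseval

section PlaneWave

variable {ι : Type*} [Fintype ι]

/-- Normalized Lebesgue measure `(2π)^{-|ι|} dk` on the torus `[0, 2π]^ι`. -/
noncomputable def torusMeasure (ι : Type*) [Fintype ι] : Measure (ι → ℝ) :=
  (ENNReal.ofReal ((2 * Real.pi) ^ Fintype.card ι))⁻¹ •
    volume.restrict (Set.univ.pi fun _ => Set.Icc (0 : ℝ) (2 * Real.pi))

/-- The character `k ↦ e^{i k·ζ}` of the torus with frequency `ζ`. -/
noncomputable def planeWave (ζ : ι → ℤ) (k : ι → ℝ) : ℂ :=
  Complex.exp (Complex.I * (∑ j, k j * (ζ j : ℝ) : ℝ))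

instance isProbabilityMeasure_torusMeasure :
    IsProbabilityMeasure (torusMeasure ι) := ⟨by
  have hpos : 0 < (2 * Real.pi) ^ Fintype.card ι := by positivity
  simp only [torusMeasure, Measure.smul_apply, Measure.restrict_apply_univ, volume_pi_pi,
    Real.volume_Icc, sub_zero, Finset.prod_const, Finset.card_univ, smul_eq_mul]
  rw [← ENNReal.ofReal_pow Real.two_pi_pos.le,
    ENNReal.inv_mul_cancel (ENNReal.ofReal_pos.2 hpos).ne' ENNReal.ofReal_ne_top]⟩

theorem norm_planeWave (ζ : ι → ℤ) (k : ι → ℝ) : ‖planeWave ζ k‖ = 1 :=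
  Complex.norm_exp_I_mul_ofReal _

theorem continuous_planeWave (ζ : ι → ℤ) : Continuous (planeWave ζ) := by
  unfold planeWave; fun_prop

theorem planeWave_eq_prod (ζ : ι → ℤ) (k : ι → ℝ) :
    planeWave ζ k = ∏ j, Complex.exp (Complex.I * ζ j * k j) := by
  rw [planeWave, Complex.ofReal_sum, Finset.mul_sum, Complex.exp_sum]
  congr! 2
  push_cast
  ring

theorem planeWave_mul_conj (η ζ : ι → ℤ) (k : ι → ℝ) :
    planeWave η k * (starRingEnd ℂ) (planeWave ζ k) = planeWave (η - ζ) k := by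
  simp only [planeWave, ← Complex.exp_conj, ← Complex.exp_add, map_mul, Complex.conj_I,
    Complex.conj_ofReal, Pi.sub_apply, Int.cast_sub, mul_sub, Finset.sum_sub_distrib,
    Complex.ofReal_sub]
  ring_nf

theorem setIntegral_Icc_exp_int_mul (n : ℤ) :
    ∫ t in Set.Icc (0 : ℝ) (2 * Real.pi), Complex.exp (Complex.I * n * t) =
      if n = 0 then (2 * Real.pi : ℂ) else 0 := by
  rw [integral_Icc_eq_integral_Ioc, ← intervalIntegral.integral_of_le Real.two_pi_pos.le]
  split_ifs with hn
  · simp [hn]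
  · have hperiod : Complex.exp (Complex.I * n * (2 * Real.pi : ℝ)) = 1 :=
      Complex.exp_eq_one_iff.2 ⟨n, by push_cast; ring⟩
    rw [integral_exp_mul_complex (by simpa using hn), hperiod]
    simp

theorem integral_planeWave (ζ : ι → ℤ) :
    ∫ k, planeWave ζ k ∂torusMeasure ι = if ζ = 0 then 1 else 0 := by
  split_ifs with hζ
  · simp [hζ, planeWave]
  · obtain ⟨j, hj⟩ := Function.ne_iff.1 hζ
    simp only [torusMeasure, integral_smul_measure, planeWave_eq_prod]
    rw [volume_pi, Measure.restrict_pi_pi, integral_fintype_prod_eq_prod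
      (f := fun j (t : ℝ) => Complex.exp (Complex.I * ζ j * t)),
      Finset.prod_eq_zero (Finset.mem_univ j), smul_zero]
    exact (setIntegral_Icc_exp_int_mul _).trans (if_neg hj)

theorem memLp_planeWave (ζ : ι → ℤ) : MemLp (planeWave ζ) 2 (torusMeasure ι) :=
  .of_bound (continuous_planeWave ζ).aestronglyMeasurable 1
    (.of_forall fun k => (norm_planeWave ζ k).le)

theorem orthonormal_planeWave :
    Orthonormal ℂ fun ζ : ι → ℤ => (memLp_planeWave ζ).toLp (planeWave ζ) := by
  classical
  rw [orthonormal_iff_ite]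
  intro ζ η
  calc inner ℂ ((memLp_planeWave ζ).toLp (planeWave ζ)) ((memLp_planeWave η).toLp (planeWave η))
      = ∫ k, planeWave (η - ζ) k ∂torusMeasure ι := by
        rw [L2.inner_def]
        refine integral_congr_ae ?_
        filter_upwards [(memLp_planeWave ζ).coeFn_toLp, (memLp_planeWave η).coeFn_toLp]
          with k hζ hη
        rw [hζ, hη, RCLike.inner_apply, planeWave_mul_conj]
    _ = if ζ = η then 1 else 0 := by
        simp only [integral_planeWave, sub_eq_zero, eq_comm]

end PlaneWave

section Shift

variable {S G : Type*} [MeasurableSpace S] [AddGroup G] {μ : Measure S}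

theorem tsum_lintegral_comp_shift {σ : G → S → S} (hσ : ∀ ζ, MeasurePreserving (σ ζ) μ μ)
    {h : S → G → G → ℝ≥0∞} (hh : ∀ x y, Measurable fun s => h s x y) (x : G) :
    ∑' ζ, ∫⁻ s, h (σ ζ s) (x - ζ) (-ζ) ∂μ = ∑' ζ, ∫⁻ s, h s (x + ζ) ζ ∂μ := by
  simp only [(hσ _).lintegral_comp (hh _ _), sub_eq_add_neg]
  exact (Equiv.neg G).tsum_eq fun ζ => ∫⁻ s, h s (x + ζ) ζ ∂μ

theorem ennreal_tsum_tsum_add_right (f : G → G → ℝ≥0∞) :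
    ∑' x, ∑' y, f (x + y) y = ∑' x, ∑' y, f x y := by
  rw [ENNReal.tsum_comm, ENNReal.tsum_comm (f := f)]
  exact tsum_congr fun y => (Equiv.addRight y).tsum_eq fun x => f x y

end Shift

theorem lintegral_enorm_sq_fourierW {S : Type*} [MeasurableSpace S] {μ : Measure S} [SFinite μ]
    {d : ℕ} {σ : (Fin d → ℤ) → S → S} (hσ : ∀ x, MeasurePreserving (σ x) μ μ)
    {F : S → (Fin d → ℤ) → (Fin d → ℤ) → ℂ} (hFmeas : ∀ x y, Measurable fun s => F s x y)
    {x : Fin d → ℤ} (hF : ∑' ζ, ∫⁻ s, ‖F s (x + ζ) ζ‖ₑ ∂μ ≠ ∞) :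
    ∫⁻ k, ∫⁻ s, ‖fourierW σ F k s x‖ₑ ^ 2 ∂μ ∂torusMeasure (Fin d) =
      ∑' ζ, ∫⁻ s, ‖F s (x + ζ) ζ‖ₑ ^ 2 ∂μ := by
  rw [← tsum_lintegral_comp_shift hσ (fun x y => (hFmeas x y).enorm)] at hF
  rw [← tsum_lintegral_comp_shift hσ (fun x y => (hFmeas x y).enorm.pow_const 2)]
  exact lintegral_lintegral_enorm_sq_tsum_of_orthonormal memLp_planeWave orthonormal_planeWave
    (fun ζ => ((hFmeas _ _).comp (hσ ζ).measurable).aemeasurable) hF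

theorem stmt_12_general {S : Type*} [MeasurableSpace S] (μ : Measure S) [SFinite μ] {d : ℕ}
    (σ : (Fin d → ℤ) → S → S) (hσ : ∀ x, MeasurePreserving (σ x) μ μ)
    (F : S → (Fin d → ℤ) → (Fin d → ℤ) → ℂ) (hFmeas : ∀ x y, Measurable fun s => F s x y)
    (hF : ∀ x, ∑' ζ, ∫⁻ s, ‖F s (x + ζ) ζ‖ₑ ∂μ ≠ ∞) :
    ∑' x, ∫⁻ k, ∫⁻ s, ‖fourierW σ F k s x‖ₑ ^ 2 ∂μ ∂torusMeasure (Fin d) =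
      ∑' x, ∑' y, ∫⁻ s, ‖F s x y‖ₑ ^ 2 ∂μ := by
  simp only [lintegral_enorm_sq_fourierW hσ hFmeas (hF _)]
  exact ennreal_tsum_tsum_add_right fun x y => ∫⁻ s, ‖F s x y‖ₑ ^ 2 ∂μ

/-- Plancherel identity. If `‖F‖_{W¹} < ∞` and `F` is square summable,
then `Σ_x (2π)^{−d} ∫_{[0,2π]^d} ∫_S |F̂_k(s,x)|² dμ dk = Σ_{x,y} ∫_S |F(s,x,y)|² dμ`. -/
theorem stmt_12 {S : Type*} [MeasurableSpace S] (μ : Measure S) [IsProbabilityMeasure μ]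
    (d : ℕ) (hd : 1 ≤ d)
    (σ : (Fin d → ℤ) → S → S)
    (hσ : ∀ x, MeasurePreserving (σ x) μ μ)
    (hσ0 : σ 0 = id)
    (hσadd : ∀ x y, σ x ∘ σ y = σ (x + y))
    (F : S → (Fin d → ℤ) → (Fin d → ℤ) → ℂ)
    (hFmeas : ∀ x y, Measurable fun s => F s x y)
    (hF : W1norm μ F < ⊤)
    (hF2 : (∑' x : Fin d → ℤ, ∑' y : Fin d → ℤ,
        ∫⁻ s, (‖F s x y‖₊ : ℝ≥0∞) ^ 2 ∂μ) < ⊤) :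
    ∑' x : Fin d → ℤ,
        (ENNReal.ofReal ((2 * Real.pi) ^ d))⁻¹ *
          ∫⁻ k : Fin d → ℝ in Set.univ.pi fun _ => Set.Icc (0 : ℝ) (2 * Real.pi),
            ∫⁻ s, (‖fourierW σ F k s x‖₊ : ℝ≥0∞) ^ 2 ∂μ =
      ∑' x : Fin d → ℤ, ∑' y : Fin d → ℤ, ∫⁻ s, (‖F s x y‖₊ : ℝ≥0∞) ^ 2 ∂μ := by
  simpa only [torusMeasure, Fintype.card_fin, lintegral_smul_measure, smul_eq_mul] using!
    stmt_12_general μ σ hσ F hFmeas fun x => ((le_iSup _ x).trans_lt hF).ne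
end
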